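/- (Theorem 3.2) Fix an integer d ≥ 1, m > 0 and x ∈ ℝ^d. Then the pushed-forward measures V_{x,a} = π_* V'_{x,a} on the space Ω̄(x) of unparametrized paths converge weakly, as a → 0⁺, to (m²/2)·V_x, where V_x = π_* V'_x. -/

import Mathlib

open MeasureTheory Filter Topology Real Set
open scoped RealInnerProductSpace ENNReal unitInterval

noncomputable section

/-- `ℝ^d` as a Euclidean space. -/
abbrev Ed (d : ℕ) := EuclideanSpace ℝ (Fin d)

/-- The space of continuous paths `[0,1] → ℝ^d`, with the uniform metric. -/
abbrev PathSp (d : ℕ) := C(unitInterval, Ed d)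

instance (d : ℕ) : MeasurableSpace (PathSp d) := borel _
instance (d : ℕ) : BorelSpace (PathSp d) := ⟨rfl⟩

/-- Evaluation of a path at a real time, clamped to `[0,1]`. -/
def evalAt {d : ℕ} (ω : PathSp d) (t : ℝ) : Ed d := ω (Set.projIcc 0 1 zero_le_one t)

/-- `Ω(x)`: continuous paths starting at `x`. -/
abbrev Omega1 {d : ℕ} (x : Ed d) := {ω : PathSp d // ω 0 = x}

/-- `Ω(x,y)`: continuous paths from `x` to `y`. -/
abbrev Omega2 {d : ℕ} (x y : Ed d) := {ω : PathSp d // ω 0 = x ∧ ω 1 = y}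

/-- clamp a real number to `[0,1]`. -/
def clamp01 (r : ℝ) : ℝ := min 1 (max 0 r)

lemma clamp01_of_nonpos {r : ℝ} (h : r ≤ 0) : clamp01 r = 0 := by
  rw [clamp01, max_eq_left h, min_eq_right zero_le_one]

lemma clamp01_of_one_le {r : ℝ} (h : 1 ≤ r) : clamp01 r = 1 := by
  rw [clamp01, max_eq_right (zero_le_one.trans h), min_eq_left h]

lemma clamp01_continuous : Continuous clamp01 :=
  continuous_const.min (continuous_const.max continuous_id)

/-- The piecewise linear path starting at `x` with `N` steps given by the increments `v i`,
the `i`-th step being linearly parametrized by `[i/N, (i+1)/N]`. -/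
def pwLinE {d : ℕ} (x : Ed d) (N : ℕ) (v : Fin N → Ed d) : PathSp d :=
  ⟨fun t => x + ∑ i : Fin N, clamp01 ((N : ℝ) * (t : ℝ) - ((i : ℕ) : ℝ)) • v i, by
    refine continuous_const.add (continuous_finset_sum _ fun i _ => ?_)
    exact ((clamp01_continuous.comp
      ((continuous_const.mul continuous_subtype_val).sub continuous_const)).smul
      continuous_const)⟩

lemma pwLinE_zero {d : ℕ} (x : Ed d) (N : ℕ) (v : Fin N → Ed d) :
    pwLinE x N v 0 = x := by
  show x + ∑ i : Fin N, clamp01 ((N : ℝ) * ((0 : unitInterval) : ℝ) - ((i : ℕ) : ℝ)) • v i = x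
  have h : ∀ i : Fin N, clamp01 ((N : ℝ) * ((0 : unitInterval) : ℝ) - ((i : ℕ) : ℝ)) = 0 := by
    intro i
    apply clamp01_of_nonpos
    have h0 : ((0 : unitInterval) : ℝ) = 0 := rfl
    rw [h0, mul_zero, zero_sub]
    exact neg_nonpos.mpr (Nat.cast_nonneg (i : ℕ))
  simp only [h, zero_smul, Finset.sum_const_zero, add_zero]

lemma pwLinE_one {d : ℕ} (x : Ed d) (N : ℕ) (v : Fin N → Ed d) :
    pwLinE x N v 1 = x + ∑ i : Fin N, v i := by
  show x + ∑ i : Fin N, clamp01 ((N : ℝ) * ((1 : unitInterval) : ℝ) - ((i : ℕ) : ℝ)) • v i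
      = x + ∑ i : Fin N, v i
  have h : ∀ i : Fin N, clamp01 ((N : ℝ) * ((1 : unitInterval) : ℝ) - ((i : ℕ) : ℝ)) = 1 := by
    intro i
    apply clamp01_of_one_le
    have h1 : ((1 : unitInterval) : ℝ) = 1 := rfl
    have h2 : ((i : ℕ) : ℝ) + 1 ≤ (N : ℝ) := by
      exact_mod_cast Nat.succ_le_of_lt i.isLt
    rw [h1, mul_one]; linarith
  simp only [h, one_smul]

/-- Piecewise linear element of `Ω(x)` with increments `v`. -/
def pwLin1 {d : ℕ} (x : Ed d) (N : ℕ) (v : Fin N → Ed d) : Omega1 x :=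
  ⟨pwLinE x N v, pwLinE_zero x N v⟩

/-- Piecewise linear element of `Ω(x,y)` with increments `v` summing to `y - x`. -/
def pwLin2 {d : ℕ} (x y : Ed d) (N : ℕ) (v : Fin N → Ed d)
    (h : x + ∑ i : Fin N, v i = y) : Omega2 x y :=
  ⟨pwLinE x N v, pwLinE_zero x N v, by rw [pwLinE_one, h]⟩

/-- the point preceding `x_i` in the list `x, x_1, …, x_N`. -/
def prevPt {d : ℕ} (x : Ed d) {N : ℕ} (xs : Fin N → Ed d) (i : Fin N) : Ed d :=
  if (i : ℕ) = 0 then x else xs ⟨(i : ℕ) - 1, lt_of_le_of_lt (Nat.pred_le _) i.isLt⟩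

/-- The discrete measure `W_{x,a,N}`, i.e. the measure
`∏_{i=1}^N (2πa²)^{-d/2} exp(-|x_i - x_{i-1}|²/(2a²)) dx_1 … dx_N` (with `x_0 = x`)
on `N`-step piecewise linear paths, placed on `{a²N} × Ω(x) ⊆ ℝ × Ω(x)`.
For `N = 0` this is the Dirac measure at `(0, constant path at x)`. -/
def WxaN {d : ℕ} (x : Ed d) (a : ℝ) (N : ℕ) : Measure (ℝ × Omega1 x) :=
  Measure.map
    (fun xs : Fin N → Ed d =>
      ((a ^ 2 * N : ℝ), pwLin1 x N fun i => xs i - prevPt x xs i))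
    (volume.withDensity fun xs : Fin N → Ed d =>
      ENNReal.ofReal (∏ i : Fin N,
        (2 * π * a ^ 2) ^ (-(d : ℝ) / 2) *
          Real.exp (-‖xs i - prevPt x xs i‖ ^ 2 / (2 * a ^ 2))))

/-- The approximating probability measure
`W_{x,a} = (1 - e^{-m²a²/2}) Σ_{N=0}^∞ e^{-m²a²N/2} W_{x,a,N}`. -/
def Wxa {d : ℕ} (x : Ed d) (m a : ℝ) : Measure (ℝ × Omega1 x) :=
  ENNReal.ofReal (1 - Real.exp (-m ^ 2 * a ^ 2 / 2)) •
    Measure.sum fun N : ℕ =>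
      ENNReal.ofReal (Real.exp (-m ^ 2 * a ^ 2 * N / 2)) • WxaN x a N

/-- The lattice step of length `a` in direction `p.1`, forwards or backwards
according to `p.2`. -/
def stepVec {d : ℕ} (a : ℝ) (p : Fin d × Bool) : Ed d :=
  (if p.2 then a else -a) • EuclideanSpace.single p.1 (1 : ℝ)

/-- The normalized counting measure `V'_{x,a,N}` giving mass `(2d)^{-N}` to each
(piecewise linearly parametrized) `N`-step nearest-neighbour lattice path in `x + aℤ^d`
starting at `x`.  For `N = 0` it is the Dirac measure at the constant path. -/
def VxaN {d : ℕ} (x : Ed d) (a : ℝ) (N : ℕ) : Measure (Omega1 x) :=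
  Measure.sum fun s : Fin N → Fin d × Bool =>
    (((2 * d : ℕ) : ℝ≥0∞) ^ N)⁻¹ •
      Measure.dirac (pwLin1 x N fun i => stepVec a (s i))

/-- The approximating probability measure
`V'_{x,a} = (1 - e^{-m²a²/(2d)}) Σ_{N=0}^∞ e^{-m²a²N/(2d)} V'_{x,a,N}`. -/
def Vxa {d : ℕ} (x : Ed d) (m a : ℝ) : Measure (Omega1 x) :=
  ENNReal.ofReal (1 - Real.exp (-m ^ 2 * a ^ 2 / (2 * d))) •
    Measure.sum fun N : ℕ =>
      ENNReal.ofReal (Real.exp (-m ^ 2 * a ^ 2 * N / (2 * d))) • VxaN x a N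

/-- `Wt` is the family of Wiener measures `(W_x^t)_{t>0}` on `Ω(x)`:
each `W_x^t` is a Borel probability measure, characterized by the characteristic
functions of its finite dimensional distributions
`∫ exp(i Σ_j ξ_j·ω(t_j)) dW_x^t = exp(-(t/2) Σ_j (t_j - t_{j-1}) |ξ_j + ⋯ + ξ_n|²
+ i x·(ξ_1 + ⋯ + ξ_n))` for all `0 = t_0 < t_1 < ⋯ < t_n ≤ 1`. -/
def IsWienerFamily {d : ℕ} (x : Ed d) (Wt : ℝ → Measure (Omega1 x)) : Prop :=
  ∀ t : ℝ, 0 < t → (IsProbabilityMeasure (Wt t) ∧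
    ∀ (n : ℕ) (ts : ℕ → ℝ), ts 0 = 0 → (∀ i < n, ts i < ts (i + 1)) → ts n ≤ 1 →
      ∀ ξ : Fin n → Ed d,
        (∫ ω : Omega1 x, Complex.exp (Complex.I *
            ((∑ i : Fin n, ⟪ξ i, evalAt ω.1 (ts ((i : ℕ) + 1))⟫ : ℝ) : ℂ)) ∂(Wt t))
          = Complex.exp
              (((-(t / 2) * ∑ i : Fin n,
                  (ts ((i : ℕ) + 1) - ts (i : ℕ)) * ‖∑ j ∈ Finset.Ici i, ξ j‖ ^ 2 : ℝ) : ℂ)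
                + Complex.I * ((⟪∑ j, ξ j, x⟫ : ℝ) : ℂ)))


/-- The reparametrization pseudo-distance
`d̄(ω,ω') = inf { d(ω, ω'∘φ) : φ an increasing homeomorphism of [0,1] }`. -/
def quotDist {d : ℕ} (ω ω' : PathSp d) : ℝ :=
  ⨅ φ : {φ : unitInterval ≃ₜ unitInterval // Monotone ⇑φ},
    dist ω (ω'.comp ⟨⇑φ.1, φ.1.continuous⟩)

/-!
The `N`-step walk on the lattice of spacing `a` converges to the Wiener measure of variance `t`
when `a → 0` and `a² N / d → t`. Sampling a path at the times `j / n` and joining the samples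
linearly moves a lattice walk only slightly, with high probability uniformly in the spacing: a
block of `N / n` steps stays small by the maximal inequality for sub-Gaussian increments. So it is
enough to identify the limit of the sampled walks, and this is Lévy's continuity theorem: the joint
characteristic function of a sample is a product over the independent steps, each factor being an
average of cosines that agrees with a Gaussian up to fourth order in `a`.

A geometric number of steps with ratio `exp (-m² a² / (2d))` is `⌊T d / a²⌋` for an exponential time
`T` of rate `m² / 2`. The weighted walks are therefore averages, against a law that does not depend
on `a`, of walks to which the first part applies, and dominated convergence concludes. The quotient
map to unparametrized paths is `1`-Lipschitz, so weak convergence passes to the images.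
-/

/-! ### Partial sums and a sub-Gaussian maximal inequality -/

section PartialSum

variable {E F : Type*} {N : ℕ}

/-- The partial sum `∑_{i < j} v i` of a finite sequence, constant in `j` from `j = N` on. -/
def partialSum [AddCommMonoid E] (v : Fin N → E) (j : ℕ) : E :=
  ∑ i : Fin N with i.val < j, v i

@[simp]
lemma partialSum_zero [AddCommMonoid E] (v : Fin N → E) : partialSum v 0 = 0 := by
  simp [partialSum]

lemma partialSum_succ' [AddCommMonoid E] (v : Fin (N + 1) → E) (j : ℕ) :
    partialSum v (j + 1) = v 0 + partialSum (fun i => v i.succ) j := by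
  simp [partialSum, Finset.sum_filter, Fin.sum_univ_succ]

lemma partialSum_succ [AddCommMonoid E] (v : Fin N → E) {j : ℕ} (hj : j < N) :
    partialSum v (j + 1) = partialSum v j + v ⟨j, hj⟩ := by
  have h : ({i : Fin N | (i : ℕ) < j + 1} : Finset (Fin N))
      = insert ⟨j, hj⟩ ({i : Fin N | (i : ℕ) < j} : Finset (Fin N)) := by
    ext i
    simp [Fin.ext_iff, le_iff_eq_or_lt]
  rw [partialSum, h, Finset.sum_insert (by simp), add_comm, partialSum]

lemma map_partialSum [AddCommMonoid E] [AddCommMonoid F] {G : Type*} [FunLike G E F]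
    [AddMonoidHomClass G E F] (g : G) (v : Fin N → E) (j : ℕ) :
    g (partialSum v j) = partialSum (fun i => g (v i)) j :=
  map_sum g _ _

lemma partialSum_sub [AddCommGroup E] (f : ℕ → E) {j : ℕ} (hj : j ≤ N) :
    partialSum (fun i : Fin N => f (i + 1) - f i) j = f j - f 0 := by
  induction j with
  | zero => simp
  | succ j ih => rw [partialSum_succ _ hj, ih (by omega)]; abel

end PartialSum

section MaximalInequality

variable {α : Type*} [MeasurableSpace α] {ν : Measure α} {X : α → ℝ}

lemma measurable_partialSum_comp (hX : Measurable X) (N j : ℕ) :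
    Measurable fun s : Fin N → α => partialSum (fun i => X (s i)) j := by
  unfold partialSum
  fun_prop

lemma measurableSet_exists_le {f : ℕ → α → ℝ} (hf : ∀ j, Measurable (f j)) (L : ℕ) (r : ℝ) :
    MeasurableSet {s | ∃ j ≤ L, r ≤ f j s} := by
  measurability

lemma measurePi_succ_apply [SigmaFinite ν] (N : ℕ) {A : Set (Fin (N + 1) → α)}
    (hA : MeasurableSet A) :
    Measure.pi (fun _ => ν) A
      = ∫⁻ p, Measure.pi (fun _ => ν)
          {s : Fin N → α | (Fin.cons p s : Fin (N + 1) → α) ∈ A} ∂ν := by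
  have h := (measurePreserving_piFinSuccAbove (fun _ : Fin (N + 1) => ν) 0).symm
  rw [← h.measure_preimage hA.nullMeasurableSet,
    Measure.prod_apply (h.measurable hA)]
  simp [MeasurableEquiv.piFinSuccAbove, Fin.insertNthEquiv, preimage, Fin.insertNth_zero']

/-- Conditioning on the first step `p` turns the event of level `r > 0` into the one of level
`r - X p`, so the bound propagates by induction without a martingale inequality. -/
lemma measurePi_exists_le_partialSum_le [IsProbabilityMeasure ν] (hX : Measurable X) {c : NNReal}
    (hXc : ProbabilityTheory.HasSubgaussianMGF X c ν) {l : ℝ} (hl : 0 ≤ l) (N L : ℕ) (r : ℝ) :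
    Measure.pi (fun _ => ν) {s : Fin N → α | ∃ j ≤ L, r ≤ partialSum (fun i => X (s i)) j}
      ≤ ENNReal.ofReal (exp (L * (c * l ^ 2 / 2) - l * r)) := by
  have h_nonpos {M L : ℕ} {r : ℝ} (hr : r ≤ 0) (P : Set (Fin M → α)) :
      Measure.pi (fun _ => ν) P ≤ ENNReal.ofReal (exp (L * (c * l ^ 2 / 2) - l * r)) := by
    refine prob_le_one.trans (ENNReal.one_le_ofReal.2 (one_le_exp ?_))
    have := mul_nonneg_of_nonpos_of_nonpos (neg_nonpos.2 hl) hr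
    have : 0 ≤ L * (c * l ^ 2 / 2) := by positivity
    linarith
  induction N generalizing L r with
  | zero =>
    rcases le_or_gt r 0 with hr | hr
    · exact h_nonpos hr _
    · simp [partialSum, hr.not_ge]
  | succ N ih =>
    rcases le_or_gt r 0 with hr | hr
    · exact h_nonpos hr _
    cases L with
    | zero => simp [hr.not_ge]
    | succ L =>
      have h_step (p : α) : {s : Fin N → α | (Fin.cons p s : Fin (N + 1) → α) ∈
            {s : Fin (N + 1) → α | ∃ j ≤ L + 1, r ≤ partialSum (fun i => X (s i)) j}}
          ⊆ {s | ∃ j ≤ L, r - X p ≤ partialSum (fun i => X (s i)) j} := by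
        rintro s ⟨_ | j, hj, h⟩
        · simp only [partialSum_zero] at h
          exact absurd h hr.not_ge
        · rw [partialSum_succ'] at h
          exact ⟨j, by omega, sub_le_iff_le_add'.2 h⟩
      calc _ = _ := measurePi_succ_apply N
            (measurableSet_exists_le (measurable_partialSum_comp hX (N + 1)) (L + 1) r)
        _ ≤ ∫⁻ p, ENNReal.ofReal (exp (L * (c * l ^ 2 / 2) - l * r) * exp (l * X p)) ∂ν :=
          lintegral_mono fun p => (measure_mono (h_step p)).trans <| (ih L _).trans_eq <| by
            rw [← exp_add]; ring_nf
        _ = ENNReal.ofReal (exp (L * (c * l ^ 2 / 2) - l * r) * ProbabilityTheory.mgf X ν l) := by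
          rw [← ofReal_integral_eq_lintegral_ofReal ((hXc.integrable_exp_mul l).const_mul _)
            (ae_of_all _ fun _ => by positivity), integral_const_mul, ProbabilityTheory.mgf]
        _ ≤ _ := by
          refine ENNReal.ofReal_le_ofReal
            ((mul_le_mul_of_nonneg_left (hXc.mgf_le l) (exp_pos _).le).trans_eq ?_)
          rw [← exp_add]; push_cast; ring_nf

lemma measurePi_exists_le_partialSum_sub_le [IsProbabilityMeasure ν] (hX : Measurable X)
    {c : NNReal} (hXc : ProbabilityTheory.HasSubgaussianMGF X c ν) {l : ℝ} (hl : 0 ≤ l)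
    (N k L : ℕ) (r : ℝ) :
    Measure.pi (fun _ => ν) {s : Fin N → α | ∃ j ≤ L,
        r ≤ partialSum (fun i => X (s i)) (k + j) - partialSum (fun i => X (s i)) k}
      ≤ ENNReal.ofReal (exp (L * (c * l ^ 2 / 2) - l * r)) := by
  induction N generalizing k with
  | zero => simpa [partialSum] using measurePi_exists_le_partialSum_le hX hXc hl 0 L r
  | succ N ih =>
    cases k with
    | zero => simpa using measurePi_exists_le_partialSum_le hX hXc hl (N + 1) L r
    | succ k =>
      rw [measurePi_succ_apply N]
      · simpa only [mem_ofPred_eq, add_right_comm k 1, partialSum_succ',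
          Fin.cons_zero, Fin.cons_succ, add_sub_add_left_eq_sub,
          lintegral_const, measure_univ, mul_one] using ih k
      · exact measurableSet_exists_le (fun j => (measurable_partialSum_comp hX (N + 1) _).sub
          (measurable_partialSum_comp hX (N + 1) _)) L r

/-- The exponential bound at `l = r / (L * c)`, the minimizer of `L * c * l ^ 2 / 2 - l * r`. -/
lemma measurePi_real_exists_le_partialSum_sub_le [IsProbabilityMeasure ν] (hX : Measurable X)
    {c : NNReal} (hXc : ProbabilityTheory.HasSubgaussianMGF X c ν) (N k L : ℕ) {r : ℝ}
    (hr : 0 ≤ r) :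
    (Measure.pi fun _ => ν).real {s : Fin N → α | ∃ j ≤ L,
        r ≤ partialSum (fun i => X (s i)) (k + j) - partialSum (fun i => X (s i)) k}
      ≤ exp (-r ^ 2 / (2 * (L * c))) := by
  rcases eq_or_ne ((L : ℝ) * c) 0 with h0 | h0
  · simp [h0]
  · have hl : 0 ≤ r / (L * c) := by positivity
    refine (ENNReal.toReal_le_of_le_ofReal (exp_pos _).le
      (measurePi_exists_le_partialSum_sub_le hX hXc hl N k L r)).trans_eq ?_
    congr 1
    have := left_ne_zero_of_mul h0
    have := right_ne_zero_of_mul h0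
    field_simp
    ring

end MaximalInequality

/-! ### Piecewise linear interpolation -/

section Interpolation

variable {d : ℕ}

lemma pwLinE_apply (x : Ed d) (N : ℕ) (v : Fin N → Ed d) (s : unitInterval) :
    pwLinE x N v s = x + ∑ i : Fin N, clamp01 (N * s - (i : ℕ)) • v i :=
  rfl

lemma clamp01_of_mem {r : ℝ} (h : r ∈ Icc 0 1) : clamp01 r = r := by
  rw [clamp01, max_eq_right h.1, min_eq_right h.2]

lemma clamp01_mem (r : ℝ) : clamp01 r ∈ Icc 0 1 :=
  ⟨le_min zero_le_one (le_max_left _ _), min_le_left _ _⟩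

lemma pwLinE_eq_lineMap (x : Ed d) (N : ℕ) (v : Fin N → Ed d) {s : unitInterval} {k : ℕ}
    (hk : (N * s - k : ℝ) ∈ Icc 0 1) :
    pwLinE x N v s
      = AffineMap.lineMap (x + partialSum v k) (x + partialSum v (k + 1)) (N * s - k : ℝ) := by
  have h_term (i : Fin N) : clamp01 (N * s - (i : ℕ)) • v i
      = AffineMap.lineMap (if i.val < k then v i else 0) (if i.val < k + 1 then v i else 0)
          (N * s - k : ℝ) := by
    rcases lt_trichotomy i.val k with h | h | h
    · have : (i.val : ℝ) + 1 ≤ k := by exact_mod_cast h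
      simp [h, h.trans (Nat.lt_succ_self k), clamp01_of_one_le (r := N * s - (i : ℕ))
        (by linarith [hk.1])]
    · simp [h, clamp01_of_mem hk, AffineMap.lineMap_apply]
    · have : (k : ℝ) + 1 ≤ i.val := by exact_mod_cast h
      simp [h.not_gt, h.not_ge, clamp01_of_nonpos (r := N * s - (i : ℕ)) (by linarith [hk.2])]
  rw [pwLinE_apply, Finset.sum_congr rfl fun i _ => h_term i]
  simp only [AffineMap.lineMap_apply_module, Finset.sum_add_distrib, ← Finset.smul_sum, partialSum,
    Finset.sum_filter]
  module

lemma continuous_evalAt (t : ℝ) : Continuous fun ω : PathSp d => evalAt ω t :=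
  continuous_eval_const _

lemma evalAt_coe (ω : PathSp d) (s : unitInterval) : evalAt ω s = ω s := by
  rw [evalAt, projIcc_val]

lemma uniformContinuous_evalAt (ω : PathSp d) : UniformContinuous (evalAt ω) :=
  (CompactSpace.uniformContinuous_of_continuous ω.continuous).comp
    (LipschitzWith.projIcc zero_le_one).uniformContinuous

lemma dist_pwLin1_le (x : Ed d) (N : ℕ) (v w : Fin N → Ed d) :
    dist (pwLin1 x N v) (pwLin1 x N w) ≤ ∑ i, dist (v i) (w i) := by
  refine (ContinuousMap.dist_le (Finset.sum_nonneg fun _ _ => dist_nonneg)).2 fun s => ?_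
  change dist (pwLinE x N v s) (pwLinE x N w s) ≤ _
  rw [pwLinE_apply, pwLinE_apply, dist_add_left]
  refine (dist_sum_sum_le _ _ _).trans (Finset.sum_le_sum fun i _ => ?_)
  rw [dist_smul₀, Real.norm_of_nonneg (clamp01_mem _).1]
  exact mul_le_of_le_one_left dist_nonneg (clamp01_mem _).2

lemma continuous_pwLin1 (x : Ed d) (N : ℕ) : Continuous (pwLin1 x N) := by
  refine continuous_iff_continuousAt.2 fun v => tendsto_iff_dist_tendsto_zero.2 ?_
  refine squeeze_zero (fun _ => dist_nonneg) (fun w => dist_pwLin1_le x N w v) ?_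
  have : Continuous fun w : Fin N → Ed d => ∑ i, dist (w i) (v i) := by fun_prop
  simpa using this.tendsto v

/-- The piecewise linear path from `x` through the points `y i`. -/
def polygon (x : Ed d) (n : ℕ) (y : Fin n → Ed d) : Omega1 x :=
  pwLin1 x n fun i => y i - prevPt x y i

lemma continuous_polygon (x : Ed d) (n : ℕ) : Continuous (polygon x n) := by
  refine (continuous_pwLin1 x n).comp (continuous_pi fun i => (continuous_apply i).sub ?_)
  unfold prevPt
  split_ifs <;> fun_prop

variable {x : Ed d}

/-- The linear interpolation of a path between its values at the times `0, 1/n, 2/n, …, 1`. -/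
def interpolate (n : ℕ) (ω : Omega1 x) : Omega1 x :=
  polygon x n fun i => evalAt ω.1 ((i.val + 1 : ℕ) / n)

lemma continuous_interpolate (n : ℕ) : Continuous (interpolate (x := x) n) :=
  (continuous_polygon x n).comp <| continuous_pi fun _ =>
    (continuous_evalAt _).comp continuous_subtype_val

lemma interpolate_eq_pwLin1 (n : ℕ) (ω : Omega1 x) :
    interpolate n ω
      = pwLin1 x n fun i => evalAt ω.1 ((i.val + 1 : ℕ) / n) - evalAt ω.1 (i.val / n) := by
  rw [interpolate, polygon]
  congr! 3 with i
  rcases i with ⟨_ | i, hi⟩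
  · simpa [prevPt] using (ω.2.symm.trans (evalAt_coe ω.1 0).symm)
  · simp [prevPt]

lemma interpolate_eq_lineMap {n : ℕ} (ω : Omega1 x) {s : unitInterval} {k : ℕ} (hkn : k < n)
    (hk : (n * s - k : ℝ) ∈ Icc 0 1) :
    (interpolate n ω).1 s = AffineMap.lineMap (evalAt ω.1 (k / n)) (evalAt ω.1 ((k + 1 : ℕ) / n))
      (n * s - k : ℝ) := by
  have h_grid {j : ℕ} (hj : j ≤ n) : x + partialSum (fun i : Fin n =>
      evalAt ω.1 ((i.val + 1 : ℕ) / n) - evalAt ω.1 (i.val / n)) j = evalAt ω.1 (j / n) := by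
    rw [partialSum_sub (fun j : ℕ => evalAt ω.1 (j / n)) hj]
    have : evalAt ω.1 0 = x := (evalAt_coe ω.1 0).trans ω.2
    simp [this]
  rw [interpolate_eq_pwLin1, ← h_grid hkn.le, ← h_grid hkn]
  exact pwLinE_eq_lineMap x n _ hk

lemma exists_mem_Icc_block {n : ℕ} (hn : 0 < n) (s : unitInterval) :
    ∃ k < n, (s : ℝ) ∈ Icc (k / n : ℝ) ((k + 1 : ℕ) / n) := by
  have hn' : (0 : ℝ) < n := Nat.cast_pos.2 hn
  simp_rw [mem_Icc, div_le_iff₀' hn', le_div_iff₀' hn']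
  have hs0 : 0 ≤ n * (s : ℝ) := mul_nonneg hn'.le s.2.1
  by_cases h : ⌊n * (s : ℝ)⌋₊ < n
  · exact ⟨_, h, Nat.floor_le hs0, by exact_mod_cast (Nat.lt_floor_add_one _).le⟩
  · have h1 : (n : ℝ) ≤ n * s := (Nat.le_floor_iff hs0).1 (not_lt.1 h)
    have h2 : n * (s : ℝ) ≤ n := mul_le_of_le_one_right hn'.le s.2.2
    refine ⟨n - 1, by omega, ?_, ?_⟩
    · rw [Nat.cast_pred hn]; linarith
    · rwa [Nat.sub_add_cancel hn]

lemma dist_interpolate_le (ω : Omega1 x) {n : ℕ} (hn : 0 < n) {ε : ℝ} (y : ℕ → Ed d)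
    (h : ∀ k < n, ∀ t ∈ Icc (k / n : ℝ) ((k + 1 : ℕ) / n), dist (evalAt ω.1 t) (y k) ≤ ε) :
    dist (interpolate n ω) ω ≤ 2 * ε := by
  have hn' : (0 : ℝ) < n := Nat.cast_pos.2 hn
  have h_le (k : ℕ) : (k / n : ℝ) ≤ (k + 1 : ℕ) / n := by gcongr; exact k.le_succ
  have hε : 0 ≤ ε := dist_nonneg.trans (h 0 hn _ (left_mem_Icc.2 (h_le 0)))
  refine (ContinuousMap.dist_le (by positivity)).2 fun s => ?_
  obtain ⟨k, hkn, hks⟩ := exists_mem_Icc_block hn s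
  have hk : (n * s - k : ℝ) ∈ Icc 0 1 := by
    rw [mem_Icc, div_le_iff₀' hn', le_div_iff₀' hn'] at hks
    push_cast at hks
    constructor <;> linarith [hks.1, hks.2]
  have h_chord : dist ((interpolate n ω).1 s) (y k) ≤ ε := by
    rw [interpolate_eq_lineMap ω hkn hk]
    exact (convex_closedBall (y k) ε).lineMap_mem (h k hkn _ (left_mem_Icc.2 (h_le k)))
      (h k hkn _ (right_mem_Icc.2 (h_le k))) hk
  have h_path : dist (ω.1 s) (y k) ≤ ε := evalAt_coe ω.1 s ▸ h k hkn s hks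
  linarith [dist_triangle_right ((interpolate n ω).1 s) (ω.1 s) (y k)]

lemma tendsto_interpolate (ω : Omega1 x) :
    Tendsto (fun n => interpolate n ω) atTop (𝓝 ω) := by
  refine Metric.tendsto_atTop'.2 fun ε hε => ?_
  obtain ⟨δ, hδ, hω⟩ :=
    Metric.uniformContinuous_iff.1 (uniformContinuous_evalAt ω.1) (ε / 4) (by positivity)
  obtain ⟨M, hM⟩ := exists_nat_one_div_lt hδ
  refine ⟨M + 1, fun n hn => ?_⟩
  have hn' : (M : ℝ) + 1 ≤ n := by exact_mod_cast hn.le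
  refine (dist_interpolate_le ω (by omega) (fun k => evalAt ω.1 (k / n))
    fun k _ t ht => (hω ?_).le).trans_lt (by linarith : 2 * (ε / 4) < ε)
  calc dist t (k / n) ≤ (k + 1 : ℕ) / n - k / n := by
        rw [Real.dist_eq, abs_of_nonneg (sub_nonneg.2 ht.1)]; gcongr; exact ht.2
    _ = 1 / n := by rw [← sub_div]; simp
    _ ≤ 1 / (M + 1) := by gcongr
    _ < δ := hM

lemma dist_interpolate_pwLin1_le (N : ℕ) (v : Fin N → Ed d) {n : ℕ} (hn : 0 < n) {ε : ℝ}
    (h : ∀ k < n, ∀ j ≤ N / n + 2,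
      ‖partialSum v (N * k / n + j) - partialSum v (N * k / n)‖ ≤ ε) :
    dist (interpolate n (pwLin1 x N v)) (pwLin1 x N v) ≤ 2 * ε := by
  refine dist_interpolate_le _ hn (fun k => x + partialSum v (N * k / n)) fun k hkn t ht => ?_
  have ht0 : 0 ≤ t := le_trans (by positivity) ht.1
  have ht1 : t ≤ 1 := ht.2.trans ((div_le_one (by positivity)).2 (by exact_mod_cast hkn))
  have h_lower : N * k / n ≤ ⌊N * t⌋₊ := by
    rw [← Nat.floor_div_eq_div (K := ℝ)]
    refine Nat.floor_mono ?_
    rw [Nat.cast_mul, mul_div_assoc]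
    gcongr
    exact ht.1
  have h_upper : ⌊N * t⌋₊ + 1 ≤ N * k / n + (N / n + 2) := by
    have h_floor : ⌊N * t⌋₊ ≤ N * (k + 1) / n := by
      rw [← Nat.floor_div_eq_div (K := ℝ)]
      refine Nat.floor_mono ?_
      rw [Nat.cast_mul, mul_div_assoc]
      gcongr
      exact ht.2
    have h_div : N * (k + 1) / n ≤ N * k / n + N / n + 1 := by
      rw [mul_add_one, Nat.add_div hn]
      split_ifs <;> omega
    omega
  have h_vertex {j : ℕ} (h0 : N * k / n ≤ j) (h1 : j ≤ N * k / n + (N / n + 2)) :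
      dist (x + partialSum v j) (x + partialSum v (N * k / n)) ≤ ε := by
    obtain ⟨i, rfl⟩ := Nat.exists_eq_add_of_le h0
    rw [dist_add_left, dist_eq_norm]
    exact h k hkn i (by omega)
  have h_mem : (N * t - ⌊N * t⌋₊ : ℝ) ∈ Icc 0 1 :=
    ⟨sub_nonneg.2 (Nat.floor_le (by positivity)), by linarith [Nat.lt_floor_add_one (N * t)]⟩
  rw [show evalAt (pwLin1 x N v).1 t = pwLinE x N v ⟨t, ht0, ht1⟩ from evalAt_coe _ ⟨t, ht0, ht1⟩,
    pwLinE_eq_lineMap x N v h_mem]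
  exact (convex_closedBall _ ε).lineMap_mem (h_vertex h_lower (by omega))
    (h_vertex (by omega) h_upper) h_mem

end Interpolation

/-! ### The lattice walk -/

section LatticeWalk

open ProbabilityTheory

variable {d : ℕ}

lemma inner_stepVec (a : ℝ) (q : Fin d × Bool) (v : Ed d) :
    ⟪stepVec a q, v⟫ = (if q.2 then a else -a) * v q.1 := by
  rw [stepVec, real_inner_smul_left, EuclideanSpace.inner_single_left]
  simp

lemma norm_stepVec (a : ℝ) (q : Fin d × Bool) : ‖stepVec a q‖ = |a| := by
  rw [stepVec, norm_smul]
  cases q.2 <;> simp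

lemma norm_le_of_inner_stepVec_le (v : Ed d) {r : ℝ}
    (h : ∀ q : Fin d × Bool, ⟪stepVec 1 q, v⟫ ≤ r) : ‖v‖ ≤ √d * r := by
  have h_coord (i : Fin d) : |v i| ≤ r :=
    abs_le'.2 ⟨by simpa [inner_stepVec] using h (i, true),
      by simpa [inner_stepVec] using h (i, false)⟩
  rcases isEmpty_or_nonempty (Fin d) with hd | ⟨⟨i⟩⟩
  · have hv : v = 0 := Subsingleton.elim _ _
    have hd : d = 0 := (Fintype.card_fin d).symm.trans Fintype.card_eq_zero
    simp [hv, hd]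
  · have hr : 0 ≤ r := (abs_nonneg _).trans (h_coord i)
    rw [EuclideanSpace.norm_eq, Real.sqrt_le_left (by positivity), mul_pow,
      Real.sq_sqrt d.cast_nonneg]
    calc ∑ i, ‖v i‖ ^ 2 ≤ ∑ _i : Fin d, r ^ 2 := by gcongr with i; exact h_coord i
      _ = d * r ^ 2 := by simp

/-- The law of the direction of a step of the lattice walk. -/
def stepLaw (d : ℕ) : Measure (Fin d × Bool) :=
  uniformOn univ

instance [NeZero d] : IsProbabilityMeasure (stepLaw d) :=
  inferInstanceAs (IsProbabilityMeasure (uniformOn univ))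

instance : SigmaFinite (stepLaw d) :=
  inferInstanceAs (SigmaFinite (uniformOn univ))

lemma stepLaw_singleton (p : Fin d × Bool) : stepLaw d {p} = ((2 * d : ℕ) : ℝ≥0∞)⁻¹ := by
  rw [stepLaw, uniformOn_univ]
  simp [mul_comm]

lemma integral_stepLaw {E : Type*} [NormedAddCommGroup E] [NormedSpace ℝ E] [CompleteSpace E]
    (f : Fin d × Bool → E) :
    ∫ p, f p ∂(stepLaw d) = (2 * d : ℝ)⁻¹ • ∑ i, (f (i, true) + f (i, false)) := by
  have : IsFiniteMeasure (stepLaw d) := inferInstanceAs (IsFiniteMeasure (uniformOn univ))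
  rw [integral_fintype Integrable.of_finite]
  simp [measureReal_def, stepLaw_singleton, Fintype.sum_prod_type, Finset.smul_sum]

lemma VxaN_eq_map (x : Ed d) (a : ℝ) (N : ℕ) :
    VxaN x a N = (Measure.pi fun _ : Fin N => stepLaw d).map
      fun s => pwLin1 x N fun i => stepVec a (s i) := by
  have h_pi : (Measure.pi fun _ : Fin N => stepLaw d)
      = Measure.sum fun s => (((2 * d : ℕ) : ℝ≥0∞) ^ N)⁻¹ • Measure.dirac s := by
    rw [← Measure.sum_smul_dirac (Measure.pi fun _ : Fin N => stepLaw d)]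
    simp only [Measure.pi_singleton, stepLaw_singleton, Finset.prod_const, Finset.card_univ,
      Fintype.card_fin, ENNReal.inv_pow]
  have h_meas : Measurable fun s : Fin N → Fin d × Bool => pwLin1 x N fun i => stepVec a (s i) :=
    .of_discrete
  rw [VxaN, h_pi, Measure.map_sum h_meas.aemeasurable]
  simp only [Measure.map_smul, Measure.map_dirac' h_meas]

instance [NeZero d] (x : Ed d) (a : ℝ) (N : ℕ) : IsProbabilityMeasure (VxaN x a N) := by
  rw [VxaN_eq_map]
  exact Measure.isProbabilityMeasure_map Measurable.of_discrete.aemeasurable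

lemma hasSubgaussianMGF_inner_stepVec [NeZero d] (a : ℝ) (q : Fin d × Bool) :
    HasSubgaussianMGF (fun p => ⟪stepVec 1 q, stepVec a p⟫) (‖a‖₊ ^ 2) (stepLaw d) := by
  have h_abs (p : Fin d × Bool) : |⟪stepVec 1 q, stepVec a p⟫| ≤ |a| := by
    simpa [norm_stepVec] using abs_real_inner_le_norm (stepVec 1 q) (stepVec a p)
  have h_mean : ∫ p, ⟪stepVec 1 q, stepVec a p⟫ ∂(stepLaw d) = 0 := by
    rw [integral_stepLaw]
    simp [stepVec]
  have h := hasSubgaussianMGF_of_mem_Icc_of_integral_eq_zero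
    (measurable_of_finite _).aemeasurable (ae_of_all _ fun p => abs_le.1 (h_abs p)) h_mean
  convert h using 1
  ext
  simp [← two_mul]

lemma measurePi_real_exists_norm_partialSum_sub_le {α : Type*} [MeasurableSpace α] {ν : Measure α}
    [IsProbabilityMeasure ν] {V : α → Ed d} (hV : Measurable V) {c : NNReal}
    (hVc : ∀ q : Fin d × Bool, HasSubgaussianMGF (fun p => ⟪stepVec 1 q, V p⟫) c ν) (N k L : ℕ)
    {r : ℝ} (hr : 0 ≤ r) :
    (Measure.pi fun _ => ν).real {s : Fin N → α | ∃ j ≤ L,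
        r < ‖partialSum (fun i => V (s i)) (k + j) - partialSum (fun i => V (s i)) k‖}
      ≤ 2 * d * exp (-r ^ 2 / (2 * d * (L * c))) := by
  have h_subset : {s : Fin N → α | ∃ j ≤ L,
        r < ‖partialSum (fun i => V (s i)) (k + j) - partialSum (fun i => V (s i)) k‖}
      ⊆ ⋃ q : Fin d × Bool, {s | ∃ j ≤ L, r / √d ≤
          partialSum (fun i => ⟪stepVec 1 q, V (s i)⟫) (k + j)
            - partialSum (fun i => ⟪stepVec 1 q, V (s i)⟫) k} := by
    rintro s ⟨j, hj, h⟩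
    simp only [mem_iUnion, mem_ofPred_eq]
    by_contra! h_all
    refine h.not_ge ((norm_le_of_inner_stepVec_le _ fun q => ?_).trans
      (by rw [mul_comm]; exact mul_le_of_le_div₀ hr (Real.sqrt_nonneg _) le_rfl))
    have := map_partialSum (innerSL ℝ (stepVec 1 q)) (fun i => V (s i))
    simp only [innerSL_apply_apply] at this
    rw [inner_sub_right, this, this]
    exact (h_all q j hj).le
  refine (measureReal_mono h_subset).trans ((measureReal_iUnion_fintype_le _).trans ?_)
  calc _ ≤ ∑ _q : Fin d × Bool, exp (-(r / √d) ^ 2 / (2 * (L * c))) := by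
        gcongr with q
        exact measurePi_real_exists_le_partialSum_sub_le (by fun_prop) (hVc q) N k L (by positivity)
    _ = _ := by
        simp [div_pow, mul_comm, mul_assoc, neg_div, div_div, mul_left_comm]

end LatticeWalk

/-! ### Tightness -/

section Tightness

variable {d : ℕ} [NeZero d]

lemma VxaN_real_lt_dist_interpolate_le (x : Ed d) (a : ℝ) (N : ℕ) {n : ℕ} (hn : 0 < n) {ε : ℝ}
    (hε : 0 ≤ ε) :
    (VxaN x a N).real {ω | 2 * ε < dist (interpolate n ω) ω}
      ≤ n * (2 * d * exp (-ε ^ 2 / (2 * d * ((N / n + 2 : ℕ) * a ^ 2)))) := by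
  have h_meas : MeasurableSet {ω : Omega1 x | 2 * ε < dist (interpolate n ω) ω} :=
    measurableSet_lt measurable_const
      ((continuous_interpolate n).dist continuous_id).measurable
  rw [VxaN_eq_map, map_measureReal_apply .of_discrete h_meas]
  have h_subset : (fun s : Fin N → Fin d × Bool => pwLin1 x N fun i => stepVec a (s i)) ⁻¹'
        {ω | 2 * ε < dist (interpolate n ω) ω}
      ⊆ ⋃ k ∈ Finset.range n, {s | ∃ j ≤ N / n + 2,
        ε < ‖partialSum (fun i => stepVec a (s i)) (N * k / n + j)
          - partialSum (fun i => stepVec a (s i)) (N * k / n)‖} := by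
    intro s hs
    simp only [mem_iUnion, Finset.mem_range, mem_ofPred_eq, exists_prop]
    by_contra! h
    exact hs.not_ge (dist_interpolate_pwLin1_le N _ hn h)
  refine (measureReal_mono h_subset (measure_ne_top _ _)).trans
    ((measureReal_biUnion_finset_le _ _).trans ?_)
  calc _ ≤ ∑ _k ∈ Finset.range n,
        2 * d * exp (-ε ^ 2 / (2 * d * ((N / n + 2 : ℕ) * (‖a‖₊ ^ 2 : NNReal)))) := by
        gcongr with k
        exact measurePi_real_exists_norm_partialSum_sub_le (measurable_of_finite _)
          (hasSubgaussianMGF_inner_stepVec a) N _ _ hε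
    _ = _ := by simp

lemma tendsto_natCast_mul_exp_neg_mul {κ : ℝ} (hκ : 0 < κ) :
    Tendsto (fun n : ℕ => n * exp (-(n * κ))) atTop (𝓝 0) := by
  have h_scaled : Tendsto (fun n : ℕ => n * κ) atTop atTop :=
    tendsto_natCast_atTop_atTop.atTop_mul_const hκ
  have h := ((tendsto_pow_mul_exp_neg_atTop_nhds_zero 1).comp h_scaled).mul_const κ⁻¹
  rw [zero_mul] at h
  refine h.congr fun n => ?_
  simp only [Function.comp_apply, pow_one]
  field_simp

lemma eventually_VxaN_real_lt_dist_interpolate_lt {ι : Type*} {l : Filter ι} {a : ι → ℝ}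
    {N : ι → ℕ} {t : ℝ} (ht : 0 < t) (ha : Tendsto a l (𝓝 0))
    (hN : Tendsto (fun i => a i ^ 2 * N i / d) l (𝓝 t)) (x : Ed d) {ε δ : ℝ} (hε : 0 < ε)
    (hδ : 0 < δ) :
    ∀ᶠ n in atTop, ∀ᶠ i in l,
      (VxaN x (a i) (N i)).real {ω | ε < dist (interpolate n ω) ω} < δ := by
  have hd : (0 : ℝ) < d := Nat.cast_pos.2 (Nat.pos_of_neZero d)
  have h_bound : Tendsto (fun n : ℕ =>
      2 * d * (n * exp (-(n * ((ε / 2) ^ 2 / (2 * d * ((t + 1) * d))))))) atTop (𝓝 0) := by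
    simpa using (tendsto_natCast_mul_exp_neg_mul
      (κ := (ε / 2) ^ 2 / (2 * d * ((t + 1) * d))) (by positivity)).const_mul (2 * d : ℝ)
  filter_upwards [h_bound.eventually_lt_const hδ, eventually_gt_atTop 0] with n hnδ hn
  have : (0 : ℝ) < n := Nat.cast_pos.2 hn
  have h_var : ∀ᶠ i in l, a i ^ 2 * N i / d + 2 * n / d * a i ^ 2 < t + 1 := by
    have h := hN.add ((ha.pow 2).const_mul (2 * n / d : ℝ))
    exact h.eventually_lt_const (by simp)
  filter_upwards [h_var, hN.eventually_const_lt ht] with i hi hi_pos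
  have ha_pos : 0 < a i ^ 2 := by
    by_contra! h
    simp [le_antisymm h (sq_nonneg _)] at hi_pos
  have h_block : (N i / n + 2 : ℕ) * a i ^ 2 ≤ (t + 1) * d / n := by
    calc _ ≤ ((N i : ℝ) / n + 2) * a i ^ 2 := by
          push_cast
          gcongr
          exact Nat.cast_div_le
      _ = (a i ^ 2 * N i / d + 2 * n / d * a i ^ 2) * d / n := by field_simp
      _ ≤ _ := by gcongr
  calc _ ≤ n * (2 * d * exp (-(ε / 2) ^ 2 / (2 * d * ((N i / n + 2 : ℕ) * a i ^ 2)))) := by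
        simpa only [mul_div_cancel₀ ε two_ne_zero] using
          VxaN_real_lt_dist_interpolate_le x (a i) (N i) hn (half_pos hε).le
    _ ≤ n * (2 * d * exp (-((ε / 2) ^ 2 / (2 * d * ((t + 1) * d / n))))) := by
        rw [neg_div]
        gcongr
    _ = 2 * d * (n * exp (-(n * ((ε / 2) ^ 2 / (2 * d * ((t + 1) * d)))))) := by
        field_simp
    _ < δ := hnδ

end Tightness

section ConvergingTogether

variable {E : Type*} [PseudoMetricSpace E] [MeasurableSpace E] [BorelSpace E]

lemma abs_integral_comp_sub_integral_le (μ : Measure E) [IsProbabilityMeasure μ] {T : E → E}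
    (hT : Continuous T) {f : E → ℝ} {M : ℝ} {K : NNReal} (hf : LipschitzWith K f)
    (hM : ∀ y z, dist (f y) (f z) ≤ M) (f_int : Integrable f μ)
    (fT_int : Integrable (fun y => f (T y)) μ) {ε : ℝ} (hε : 0 ≤ ε) :
    |∫ y, f (T y) ∂μ - ∫ y, f y ∂μ| ≤ K * ε + M * μ.real {y | ε < dist (T y) y} := by
  have h_meas : MeasurableSet {y | ε < dist (T y) y} :=
    measurableSet_lt measurable_const (hT.dist continuous_id).measurable
  have h_pointwise (y : E) :
      ‖f (T y) - f y‖ ≤ K * ε + {y | ε < dist (T y) y}.indicator (fun _ => M) y := by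
    rw [← dist_eq_norm]
    by_cases hy : ε < dist (T y) y
    · rw [indicator_of_mem (by exact hy)]
      exact (hM _ _).trans (le_add_of_nonneg_left (by positivity))
    · rw [indicator_of_notMem (by exact hy), add_zero]
      exact (hf.dist_le_mul _ _).trans (by gcongr; exact not_lt.1 hy)
  rw [← integral_sub fT_int f_int]
  have h_ind_int := (integrable_const (μ := μ) M).indicator h_meas
  calc _ ≤ ∫ y, (K * ε + {y | ε < dist (T y) y}.indicator (fun _ => M) y) ∂μ :=
        norm_integral_le_of_norm_le ((integrable_const _).add h_ind_int) (ae_of_all _ h_pointwise)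
    _ = _ := by
        rw [integral_add (integrable_const _) h_ind_int, integral_indicator_const _ h_meas]
        simp [mul_comm]

lemma tendsto_of_tendsto_integral_comp {ι : Type*} {l : Filter ι} [l.IsCountablyGenerated]
    {μ : ι → ProbabilityMeasure E} {ν : ProbabilityMeasure E} {T : ℕ → E → E}
    (hT : ∀ n, Continuous (T n)) (hT_id : ∀ y, Tendsto (fun n => T n y) atTop (𝓝 y))
    (h_comp : ∀ n (f : BoundedContinuousFunction E ℝ),
      Tendsto (fun i => ∫ y, f (T n y) ∂(μ i : Measure E)) l (𝓝 (∫ y, f (T n y) ∂(ν : Measure E))))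
    (h_close : ∀ ε > 0, ∀ δ > 0, ∀ᶠ n in atTop, ∀ᶠ i in l,
      (μ i : Measure E).real {y | ε < dist (T n y) y} < δ) :
    Tendsto μ l (𝓝 ν) := by
  refine tendsto_iff_forall_lipschitz_integral_tendsto.2 fun f ⟨M, hM⟩ ⟨K, hf⟩ => ?_
  let g : BoundedContinuousFunction E ℝ := .mkOfBound ⟨f, hf.continuous⟩ M hM
  have h_limit : Tendsto (fun n => ∫ y, f (T n y) ∂(ν : Measure E)) atTop
      (𝓝 (∫ y, f y ∂(ν : Measure E))) :=
    tendsto_integral_of_dominated_convergence (fun _ => ‖g‖)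
      (fun n => (g.continuous.comp (hT n)).aestronglyMeasurable) (integrable_const _)
      (fun n => ae_of_all _ fun y => g.norm_coe_le_norm (T n y))
      (ae_of_all _ fun y => (g.continuous.tendsto y).comp (hT_id y))
  refine Metric.tendsto_nhds.2 fun η hη => ?_
  obtain ⟨y⟩ := ν.nonempty
  have hM_nonneg : 0 ≤ M := dist_nonneg.trans (hM y y)
  obtain ⟨ε, hε, hKMε⟩ := exists_pos_mul_lt (show 0 < η / 3 by positivity) (K + M)
  obtain ⟨n, hn_limit, hn_close⟩ := ((Metric.tendsto_nhds.1 h_limit (η / 3) (by positivity)).and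
    (h_close ε hε ε hε)).exists
  filter_upwards [hn_close, Metric.tendsto_nhds.1 (h_comp n g) (η / 3) (by positivity)]
    with i hi_close hi_comp
  have h_replace : dist (∫ y, f y ∂(μ i : Measure E)) (∫ y, f (T n y) ∂(μ i : Measure E))
      < η / 3 := by
    rw [dist_comm]
    refine (abs_integral_comp_sub_integral_le (μ i : Measure E) (hT n) hf hM
      (g.integrable _) ((g.compContinuous ⟨T n, hT n⟩).integrable _) hε.le).trans_lt ?_
    calc K * ε + M * (μ i : Measure E).real {y | ε < dist (T n y) y} ≤ K * ε + M * ε := by gcongr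
      _ < η / 3 := by rwa [← add_mul]
  calc _ ≤ _ := dist_triangle4 _ (∫ y, f (T n y) ∂(μ i : Measure E))
        (∫ y, f (T n y) ∂(ν : Measure E)) _
    _ < η / 3 + η / 3 + η / 3 := by gcongr; exact hi_comp
    _ = η := by ring

end ConvergingTogether

/-! ### Characteristic functions of the lattice walk -/

section CharacteristicFunction

lemma norm_prod_sub_prod_le_sum {ι R : Type*} [NormedCommRing R] [NormOneClass R] (s : Finset ι)
    {z w : ι → R} (hz : ∀ i ∈ s, ‖z i‖ ≤ 1) (hw : ∀ i ∈ s, ‖w i‖ ≤ 1) :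
    ‖∏ i ∈ s, z i - ∏ i ∈ s, w i‖ ≤ ∑ i ∈ s, ‖z i - w i‖ := by
  induction s using Finset.cons_induction with
  | empty => simp
  | cons i s hi ih =>
    rw [Finset.forall_mem_cons] at hz hw
    rw [Finset.prod_cons, Finset.prod_cons, Finset.sum_cons]
    have h_prod : ‖∏ j ∈ s, w j‖ ≤ 1 :=
      (s.norm_prod_le w).trans (Finset.prod_le_one (fun _ _ => norm_nonneg _) hw.2)
    calc ‖z i * ∏ j ∈ s, z j - w i * ∏ j ∈ s, w j‖
        = ‖(z i - w i) * ∏ j ∈ s, w j + z i * (∏ j ∈ s, z j - ∏ j ∈ s, w j)‖ := by ring_nf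
      _ ≤ ‖z i - w i‖ * ‖∏ j ∈ s, w j‖ + ‖z i‖ * ‖∏ j ∈ s, z j - ∏ j ∈ s, w j‖ :=
          norm_add_le_of_le (norm_mul_le _ _) (norm_mul_le _ _)
      _ ≤ ‖z i - w i‖ * 1 + 1 * ∑ j ∈ s, ‖z j - w j‖ := by
          gcongr
          exacts [hz.1, ih hz.2 hw.2]
      _ = _ := by ring

variable {d : ℕ}

/-- The characteristic function of a lattice step of length `a`. -/
def stepChar (a : ℝ) (η : Ed d) : ℝ :=
  (d : ℝ)⁻¹ * ∑ k, cos (a * η k)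

lemma integral_exp_inner_stepVec (a : ℝ) (η : Ed d) :
    ∫ p, Complex.exp (Complex.I * (⟪η, stepVec a p⟫ : ℝ)) ∂(stepLaw d) = stepChar a η := by
  have h_cos (k : Fin d) : Complex.exp (Complex.I * (⟪η, stepVec a (k, true)⟫ : ℝ))
      + Complex.exp (Complex.I * (⟪η, stepVec a (k, false)⟫ : ℝ)) = 2 * (cos (a * η k) : ℝ) := by
    simp only [real_inner_comm _ η, inner_stepVec]
    rw [Complex.ofReal_cos, Complex.two_cos]
    simp [mul_comm]
  rw [integral_stepLaw, Finset.sum_congr rfl fun k _ => h_cos k, ← Finset.mul_sum, stepChar,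
    Complex.real_smul]
  push_cast
  rw [mul_inv]
  ring

lemma abs_stepChar_le_one (a : ℝ) (η : Ed d) : |stepChar a η| ≤ 1 := by
  rw [stepChar, abs_mul, abs_of_nonneg (by positivity)]
  calc (d : ℝ)⁻¹ * |∑ k, cos (a * η k)| ≤ (d : ℝ)⁻¹ * ∑ _k : Fin d, 1 := by
        gcongr
        exact (Finset.abs_sum_le_sum_abs _ _).trans (by gcongr; exact abs_cos_le_one _)
    _ ≤ 1 := by simpa using inv_mul_le_one

variable [NeZero d]

lemma abs_stepChar_sub_one_sub_le {a : ℝ} {η : Ed d} (h : |a| * ‖η‖ ≤ 1) :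
    |stepChar a η - (1 - a ^ 2 / (2 * d) * ‖η‖ ^ 2)| ≤ (|a| * ‖η‖) ^ 4 := by
  have hd : (0 : ℝ) < d := Nat.cast_pos.2 (Nat.pos_of_neZero d)
  have h_cos (k : Fin d) : |cos (a * η k) - (1 - (a * η k) ^ 2 / 2)| ≤ (|a| * ‖η‖) ^ 4 := by
    have hk : |a * η k| ≤ |a| * ‖η‖ := by
      rw [abs_mul]
      gcongr
      exact PiLp.norm_apply_le η k
    calc _ ≤ |a * η k| ^ 4 * (5 / 96) := cos_bound (hk.trans h)
      _ ≤ |a * η k| ^ 4 := mul_le_of_le_one_right (by positivity) (by norm_num)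
      _ ≤ _ := by gcongr
  have h_mean : stepChar a η - (1 - a ^ 2 / (2 * d) * ‖η‖ ^ 2)
      = (d : ℝ)⁻¹ * ∑ k, (cos (a * η k) - (1 - (a * η k) ^ 2 / 2)) := by
    rw [stepChar, Finset.sum_sub_distrib, Finset.sum_sub_distrib, EuclideanSpace.norm_sq_eq]
    simp only [mul_pow, Real.norm_eq_abs, sq_abs, ← Finset.mul_sum, ← Finset.sum_div,
      Finset.sum_const, Finset.card_univ, Fintype.card_fin, nsmul_eq_mul, mul_one]
    field_simp
  rw [h_mean, abs_mul, abs_of_pos (inv_pos.2 hd), inv_mul_le_iff₀ hd]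
  calc _ ≤ ∑ _k : Fin d, (|a| * ‖η‖) ^ 4 :=
        (Finset.abs_sum_le_sum_abs _ _).trans (Finset.sum_le_sum fun k _ => h_cos k)
    _ = d * (|a| * ‖η‖) ^ 4 := by simp

lemma abs_stepChar_sub_exp_le {a : ℝ} {η : Ed d} (h : |a| * ‖η‖ ≤ 1) :
    |stepChar a η - exp (-(a ^ 2 / (2 * d) * ‖η‖ ^ 2))| ≤ 2 * (|a| * ‖η‖) ^ 4 := by
  have hd : (1 : ℝ) ≤ d := Nat.one_le_cast.2 (Nat.pos_of_neZero d)
  set q := a ^ 2 / (2 * d) * ‖η‖ ^ 2 with hq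
  have hq_nonneg : 0 ≤ q := by positivity
  have hq_le : q ≤ (|a| * ‖η‖) ^ 2 := by
    rw [mul_pow, sq_abs, hq]
    gcongr
    exact div_le_self (sq_nonneg a) (by linarith)
  have hq_le_one : |-q| ≤ 1 := by
    rw [abs_neg, abs_of_nonneg hq_nonneg]
    exact hq_le.trans (pow_le_one₀ (by positivity) h)
  have h_exp : |exp (-q) - (1 - q)| ≤ (|a| * ‖η‖) ^ 4 := by
    calc |exp (-q) - (1 - q)| = |exp (-q) - 1 - -q| := by ring_nf
      _ ≤ (-q) ^ 2 := abs_exp_sub_one_sub_id_le hq_le_one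
      _ = q ^ 2 := neg_sq q
      _ ≤ ((|a| * ‖η‖) ^ 2) ^ 2 := by gcongr
      _ = _ := by ring
  calc _ ≤ |stepChar a η - (1 - q)| + |1 - q - exp (-q)| := abs_sub_le _ _ _
    _ ≤ (|a| * ‖η‖) ^ 4 + (|a| * ‖η‖) ^ 4 := by
        rw [abs_sub_comm (1 - q)]
        exact add_le_add (abs_stepChar_sub_one_sub_le h) h_exp
    _ = _ := by ring

end CharacteristicFunction

section FiniteDimensional

variable {d n : ℕ}

/-- The vector paired with the `i`-th step of an `N`-step walk when the positions of the walk at the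
times `τ` are paired with `ξ`. -/
def stepDual (N : ℕ) (τ : Fin n → unitInterval) (ξ : Fin n → Ed d) (i : Fin N) : Ed d :=
  ∑ j, clamp01 (N * τ j - i.val) • ξ j

lemma sum_inner_pwLin1 (x : Ed d) (N : ℕ) (v : Fin N → Ed d) (τ : Fin n → unitInterval)
    (ξ : Fin n → Ed d) :
    ∑ j, ⟪ξ j, (pwLin1 x N v).1 (τ j)⟫ = ⟪∑ j, ξ j, x⟫ + ∑ i, ⟪stepDual N τ ξ i, v i⟫ := by
  simp only [pwLin1, pwLinE_apply, stepDual, inner_add_right, Finset.sum_add_distrib, sum_inner,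
    inner_sum, inner_smul_left, inner_smul_right, conj_trivial]
  rw [Finset.sum_comm]

lemma integral_exp_inner_VxaN (x : Ed d) (a : ℝ) (N : ℕ) (τ : Fin n → unitInterval)
    (ξ : Fin n → Ed d) :
    ∫ ω, Complex.exp (Complex.I * (∑ j, ⟪ξ j, ω.1 (τ j)⟫ : ℝ)) ∂(VxaN x a N)
      = Complex.exp (Complex.I * (⟪∑ j, ξ j, x⟫ : ℝ))
        * (∏ i : Fin N, stepChar a (stepDual N τ ξ i) : ℝ) := by
  rw [VxaN_eq_map, integral_map Measurable.of_discrete.aemeasurable (by fun_prop)]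
  simp only [sum_inner_pwLin1, Complex.ofReal_add, Complex.ofReal_sum, mul_add, Complex.exp_add,
    Finset.mul_sum, Complex.exp_sum, integral_const_mul]
  rw [integral_fintype_prod_eq_prod fun i p =>
    Complex.exp (Complex.I * (⟪stepDual N τ ξ i, stepVec a p⟫ : ℝ))]
  simp only [integral_exp_inner_stepVec, Complex.ofReal_prod]

lemma sum_clamp01 (N : ℕ) (y : ℝ) :
    ∑ i : Fin N, clamp01 (y - i.val) = min (max 0 y) N := by
  have h_telescope (i : ℕ) :
      clamp01 (y - i) = min (max 0 y) (i + 1 : ℕ) - min (max 0 y) i := by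
    have : (0 : ℝ) ≤ i := i.cast_nonneg
    push_cast
    grind [clamp01]
  rw [Fin.sum_univ_eq_sum_range fun i => clamp01 (y - i)]
  simp only [h_telescope]
  rw [Finset.sum_range_sub fun i : ℕ => min (max 0 y) i]
  simp

lemma abs_sum_clamp01_mul_sub_min_le {N : ℕ} {y z : ℝ} (hy : y ∈ Icc 0 (N : ℝ))
    (hz : z ∈ Icc 0 (N : ℝ)) :
    |∑ i : Fin N, clamp01 (y - i.val) * clamp01 (z - i.val) - min y z| ≤ 1 := by
  wlog hyz : y ≤ z generalizing y z
  · simpa only [min_comm, mul_comm] using this hz hy (le_of_not_ge hyz)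
  have h_lower (i : Fin N) :
      clamp01 (y - 1 - i.val) ≤ clamp01 (y - i.val) * clamp01 (z - i.val) := by
    rcases le_total (y - 1 - i.val) 0 with h | h
    · rw [clamp01_of_nonpos h]
      exact mul_nonneg (clamp01_mem _).1 (clamp01_mem _).1
    · rw [clamp01_of_one_le (r := y - i.val) (by linarith),
        clamp01_of_one_le (r := z - i.val) (by linarith), one_mul]
      exact (clamp01_mem _).2
  have h_upper (i : Fin N) : clamp01 (y - i.val) * clamp01 (z - i.val) ≤ clamp01 (y - i.val) :=
    mul_le_of_le_one_right (clamp01_mem _).1 (clamp01_mem _).2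
  have h_sum_lower := Finset.sum_le_sum fun i (_ : i ∈ Finset.univ) => h_lower i
  have h_sum_upper := Finset.sum_le_sum fun i (_ : i ∈ Finset.univ) => h_upper i
  rw [sum_clamp01, min_eq_left (max_le (hy.1.trans hy.2) (by linarith [hy.2]))] at h_sum_lower
  rw [sum_clamp01, max_eq_right hy.1, min_eq_left hy.2] at h_sum_upper
  rw [min_eq_left hyz, abs_le]
  constructor <;> linarith [le_max_right 0 (y - 1)]

lemma norm_stepDual_le (N : ℕ) (τ : Fin n → unitInterval) (ξ : Fin n → Ed d) (i : Fin N) :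
    ‖stepDual N τ ξ i‖ ≤ ∑ j, ‖ξ j‖ := by
  refine norm_sum_le_of_le _ fun j _ => ?_
  rw [norm_smul, Real.norm_of_nonneg (clamp01_mem _).1]
  exact mul_le_of_le_one_left (norm_nonneg _) (clamp01_mem _).2

lemma sum_norm_sq_stepDual (N : ℕ) (τ : Fin n → unitInterval) (ξ : Fin n → Ed d) :
    ∑ i, ‖stepDual N τ ξ i‖ ^ 2 = ∑ j, ∑ k,
      (∑ i : Fin N, clamp01 (N * τ j - i.val) * clamp01 (N * τ k - i.val)) * ⟪ξ j, ξ k⟫ := by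
  simp only [← real_inner_self_eq_norm_sq, stepDual, sum_inner, inner_sum, Finset.sum_mul,
    real_inner_smul_left, real_inner_smul_right, mul_assoc]
  rw [Finset.sum_comm]
  refine Finset.sum_congr rfl fun j _ => Finset.sum_comm.trans ?_
  simp only [real_inner_comm (ξ j)]

lemma sum_sub_mul_norm_sq_sum_Ici {ts : ℕ → ℝ} (h_zero : ts 0 = 0) (h_mono : MonotoneOn ts (Iic n))
    (ξ : Fin n → Ed d) :
    ∑ i : Fin n, (ts (i + 1) - ts i) * ‖∑ j ∈ Finset.Ici i, ξ j‖ ^ 2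
      = ∑ j : Fin n, ∑ k : Fin n, min (ts (j + 1)) (ts (k + 1)) * ⟪ξ j, ξ k⟫ := by
  have h_min (j k : Fin n) : min (ts (j + 1)) (ts (k + 1))
      = ∑ i : Fin n, if i ≤ j ∧ i ≤ k then ts (i + 1) - ts i else 0 := by
    have h := partialSum_sub (N := n) ts (j := min j.val k.val + 1) (by omega)
    rw [h_zero, sub_zero, partialSum, Finset.sum_filter] at h
    simp only [Nat.lt_add_one_iff, le_min_iff] at h
    refine Eq.trans ?_ h.symm
    rw [← min_add_add_right]
    exact (h_mono.map_min (mem_Iic.2 j.isLt) (mem_Iic.2 k.isLt)).symm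
  have h_Ici (i : Fin n) : ∑ j ∈ Finset.Ici i, ξ j = ∑ j, if i ≤ j then ξ j else 0 := by
    rw [← Finset.sum_filter]
    congr 1
    ext
    simp
  simp only [h_min, h_Ici, ← real_inner_self_eq_norm_sq, sum_inner, inner_sum, Finset.mul_sum,
    Finset.sum_mul]
  rw [Finset.sum_comm]
  refine Finset.sum_congr rfl fun j _ => Finset.sum_comm.trans ?_
  refine Finset.sum_congr rfl fun k _ => Finset.sum_congr rfl fun i _ => ?_
  by_cases hj : i ≤ j <;> by_cases hk : i ≤ k <;> simp [hj, hk, real_inner_comm]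

variable {ι : Type*} {l : Filter ι} {a : ι → ℝ} {N : ι → ℕ} {t : ℝ}

lemma tendsto_sum_norm_sq_stepDual (ha : Tendsto a l (𝓝 0))
    (hN : Tendsto (fun i => a i ^ 2 * N i / d) l (𝓝 t)) (τ : Fin n → unitInterval)
    (ξ : Fin n → Ed d) :
    Tendsto (fun i => ∑ p, a i ^ 2 / (2 * d) * ‖stepDual (N i) τ ξ p‖ ^ 2) l
      (𝓝 (t / 2 * ∑ j, ∑ k, min (τ j : ℝ) (τ k) * ⟪ξ j, ξ k⟫)) := by
  simp only [← Finset.mul_sum, sum_norm_sq_stepDual]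
  simp only [Finset.mul_sum, ← mul_assoc]
  refine tendsto_finsetSum _ fun j _ => tendsto_finsetSum _ fun k _ => Tendsto.mul_const _ ?_
  have h_mem (i : ι) (s : unitInterval) : (N i * s : ℝ) ∈ Icc 0 (N i : ℝ) :=
    ⟨mul_nonneg (N i).cast_nonneg s.2.1, mul_le_of_le_one_right (N i).cast_nonneg s.2.2⟩
  have h_main : Tendsto (fun i => a i ^ 2 * N i / d / 2 * min (τ j : ℝ) (τ k)) l
      (𝓝 (t / 2 * min (τ j : ℝ) (τ k))) :=
    (hN.div_const 2).mul_const _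
  have h_error : Tendsto (fun i => a i ^ 2 / (2 * d)) l (𝓝 0) := by
    simpa using (ha.pow 2).div_const (2 * d : ℝ)
  refine tendsto_of_tendsto_of_dist h_main (squeeze_zero (fun _ => dist_nonneg) (fun i => ?_)
    h_error)
  have h_sum := abs_sum_clamp01_mul_sub_min_le (h_mem i (τ j)) (h_mem i (τ k))
  rw [← mul_min_of_nonneg _ _ (N i).cast_nonneg] at h_sum
  calc _ = |a i ^ 2 / (2 * d) * (∑ p : Fin (N i),
          clamp01 (N i * τ j - p.val) * clamp01 (N i * τ k - p.val)
            - N i * min (τ j : ℝ) (τ k))| := by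
        rw [dist_comm, Real.dist_eq, mul_sub, Finset.mul_sum]
        ring_nf
    _ ≤ a i ^ 2 / (2 * d) := by
        rw [abs_mul, abs_of_nonneg (by positivity)]
        exact mul_le_of_le_one_right (by positivity) h_sum

lemma tendsto_prod_stepChar [NeZero d] (ha : Tendsto a l (𝓝 0))
    (hN : Tendsto (fun i => a i ^ 2 * N i / d) l (𝓝 t)) (τ : Fin n → unitInterval)
    (ξ : Fin n → Ed d) :
    Tendsto (fun i => ∏ p, stepChar (a i) (stepDual (N i) τ ξ p)) l
      (𝓝 (exp (-(t / 2 * ∑ j, ∑ k, min (τ j : ℝ) (τ k) * ⟪ξ j, ξ k⟫)))) := by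
  have hd : (0 : ℝ) < d := Nat.cast_pos.2 (Nat.pos_of_neZero d)
  set R := ∑ j, ‖ξ j‖
  have h_main := (continuous_exp.tendsto _).comp (tendsto_sum_norm_sq_stepDual ha hN τ ξ).neg
  have h_error : Tendsto (fun i => 2 * d * R ^ 4 * (a i ^ 2 * N i / d) * a i ^ 2) l (𝓝 0) := by
    simpa using (hN.const_mul (2 * d * R ^ 4)).mul (ha.pow 2)
  have h_small : ∀ᶠ i in l, |a i| * R ≤ 1 := by
    have h := ha.abs.mul_const R
    rw [abs_zero, zero_mul] at h
    exact h.eventually_le_const zero_lt_one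
  refine tendsto_of_tendsto_of_dist h_main
    (squeeze_zero' (Eventually.of_forall fun _ => dist_nonneg) ?_ h_error)
  filter_upwards [h_small] with i hi
  have h_dual (p : Fin (N i)) : |a i| * ‖stepDual (N i) τ ξ p‖ ≤ |a i| * R := by
    gcongr
    exact norm_stepDual_le _ _ _ _
  rw [dist_comm, Real.dist_eq, Function.comp_apply, ← Finset.sum_neg_distrib, exp_sum]
  calc _ ≤ ∑ p : Fin (N i), |stepChar (a i) (stepDual (N i) τ ξ p)
          - exp (-(a i ^ 2 / (2 * d) * ‖stepDual (N i) τ ξ p‖ ^ 2))| := by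
        refine norm_prod_sub_prod_le_sum (R := ℝ) _ (fun p _ => ?_) fun p _ => ?_
        · exact abs_stepChar_le_one _ _
        · rw [Real.norm_of_nonneg (exp_nonneg _), exp_le_one_iff, neg_nonpos]
          positivity
    _ ≤ ∑ _p : Fin (N i), 2 * (|a i| * R) ^ 4 := by
        refine Finset.sum_le_sum fun p _ => (abs_stepChar_sub_exp_le ((h_dual p).trans hi)).trans ?_
        gcongr 2 * ?_ ^ 4
        exact h_dual p
    _ = _ := by
        rw [Finset.sum_const, Finset.card_univ, Fintype.card_fin, nsmul_eq_mul, mul_pow,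
          Even.pow_abs (by decide)]
        field_simp

end FiniteDimensional

/-! ### Donsker's theorem -/

section Levy

variable {n : ℕ}

lemma tendsto_integral_of_tendsto_integral_exp_inner {Ω E : Type*} [MeasurableSpace Ω]
    [NormedAddCommGroup E] [InnerProductSpace ℝ E] [FiniteDimensional ℝ E] [MeasurableSpace E]
    [BorelSpace E] {μ : ℕ → ProbabilityMeasure Ω} {μ₀ : ProbabilityMeasure Ω} {Y : Ω → Fin n → E}
    (hY : Measurable Y)
    (h : ∀ ξ : Fin n → E, Tendsto
      (fun i => ∫ ω, Complex.exp (Complex.I * (∑ j, ⟪ξ j, Y ω j⟫ : ℝ)) ∂(μ i : Measure Ω)) atTop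
      (𝓝 (∫ ω, Complex.exp (Complex.I * (∑ j, ⟪ξ j, Y ω j⟫ : ℝ)) ∂(μ₀ : Measure Ω))))
    (f : BoundedContinuousFunction (Fin n → E) ℝ) :
    Tendsto (fun i => ∫ ω, f (Y ω) ∂(μ i : Measure Ω)) atTop
      (𝓝 (∫ ω, f (Y ω) ∂(μ₀ : Measure Ω))) := by
  have hT : Measurable fun ω => WithLp.toLp 2 (Y ω) :=
    (PiLp.continuous_toLp 2 fun _ : Fin n => E).measurable.comp hY
  have h_charFun (ν : ProbabilityMeasure Ω) (ξ : PiLp 2 fun _ : Fin n => E) :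
      charFun (ν.map hT.aemeasurable : Measure (PiLp 2 fun _ : Fin n => E)) ξ
        = ∫ ω, Complex.exp (Complex.I * (∑ j, ⟪ξ j, Y ω j⟫ : ℝ)) ∂(ν : Measure Ω) := by
    rw [charFun_apply, ProbabilityMeasure.toMeasure_map,
      integral_map hT.aemeasurable (by fun_prop)]
    simp only [PiLp.inner_apply, mul_comm, real_inner_comm]
  have h_lim : Tendsto (fun i => (μ i).map hT.aemeasurable) atTop (𝓝 (μ₀.map hT.aemeasurable)) :=
    ProbabilityMeasure.tendsto_iff_tendsto_charFun.2 fun ξ => by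
      simpa only [h_charFun] using h fun j => ξ j
  have h_map (ν : ProbabilityMeasure Ω) :
      ∫ y, f (WithLp.ofLp y) ∂(ν.map hT.aemeasurable : Measure (PiLp 2 fun _ : Fin n => E))
        = ∫ ω, f (Y ω) ∂(ν : Measure Ω) :=
    integral_map hT.aemeasurable (f.continuous.comp (PiLp.continuous_ofLp 2 _)).aestronglyMeasurable
  simp only [← h_map]
  exact ProbabilityMeasure.tendsto_iff_forall_integral_tendsto.1 h_lim
    (f.compContinuous ⟨WithLp.ofLp, PiLp.continuous_ofLp 2 _⟩)

variable {d : ℕ} [NeZero d] {x : Ed d} {Wt : ℝ → Measure (Omega1 x)} {a : ℕ → ℝ} {N : ℕ → ℕ}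
  {t : ℝ}

lemma tendsto_integral_exp_inner_VxaN (hWt : IsWienerFamily x Wt) (ht : 0 < t)
    (ha : Tendsto a atTop (𝓝 0)) (hN : Tendsto (fun i => a i ^ 2 * N i / d) atTop (𝓝 t))
    {ts : ℕ → ℝ} (h_zero : ts 0 = 0) (h_lt : ∀ i < n, ts i < ts (i + 1)) (h_le : ts n ≤ 1)
    (ξ : Fin n → Ed d) :
    Tendsto (fun i => ∫ ω, Complex.exp
        (Complex.I * (∑ j : Fin n, ⟪ξ j, evalAt ω.1 (ts (j + 1))⟫ : ℝ)) ∂(VxaN x (a i) (N i))) atTop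
      (𝓝 (∫ ω, Complex.exp
        (Complex.I * (∑ j : Fin n, ⟪ξ j, evalAt ω.1 (ts (j + 1))⟫ : ℝ)) ∂(Wt t))) := by
  have h_mono : MonotoneOn ts (Iic n) := (strictMonoOn_Iic_of_lt_succ h_lt).monotoneOn
  have h_mem (j : Fin n) : ts (j + 1) ∈ Icc 0 1 :=
    ⟨h_zero.symm.trans_le (h_mono (by simp) (mem_Iic.2 j.isLt) (Nat.zero_le _)),
      (h_mono (mem_Iic.2 j.isLt) (by simp) j.isLt).trans h_le⟩
  let τ (j : Fin n) : unitInterval := projIcc 0 1 zero_le_one (ts (j + 1))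
  have hτ (j : Fin n) : (τ j : ℝ) = ts (j + 1) :=
    congrArg Subtype.val (projIcc_of_mem zero_le_one (h_mem j))
  have h_lim := (Complex.continuous_ofReal.tendsto _).comp (tendsto_prod_stepChar ha hN τ ξ)
  rw [(hWt t ht).2 n ts h_zero h_lt h_le ξ, sum_sub_mul_norm_sq_sum_Ici h_zero h_mono,
    Complex.exp_add, mul_comm, neg_mul, ← Complex.ofReal_exp]
  simp only [hτ] at h_lim
  exact (h_lim.const_mul _).congr fun i => (integral_exp_inner_VxaN x (a i) (N i) τ ξ).symm

theorem tendsto_integral_VxaN (hWt : IsWienerFamily x Wt) (ht : 0 < t)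
    (ha : Tendsto a atTop (𝓝 0)) (hN : Tendsto (fun i => a i ^ 2 * N i / d) atTop (𝓝 t))
    (f : BoundedContinuousFunction (Omega1 x) ℝ) :
    Tendsto (fun i => ∫ ω, f ω ∂(VxaN x (a i) (N i))) atTop (𝓝 (∫ ω, f ω ∂(Wt t))) := by
  let μ (i : ℕ) : ProbabilityMeasure (Omega1 x) := ⟨VxaN x (a i) (N i), inferInstance⟩
  let μ₀ : ProbabilityMeasure (Omega1 x) := ⟨Wt t, (hWt t ht).1⟩
  have h_grid (n i : ℕ) (hi : i < n) : (i : ℝ) / n < (i + 1 : ℕ) / n := by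
    have hn : 0 < n := i.zero_le.trans_lt hi
    gcongr
    exact i.lt_succ_self
  have h_interpolate (n : ℕ) (f : BoundedContinuousFunction (Omega1 x) ℝ) :
      Tendsto (fun i => ∫ ω, f (interpolate n ω) ∂(μ i : Measure (Omega1 x))) atTop
        (𝓝 (∫ ω, f (interpolate n ω) ∂(μ₀ : Measure (Omega1 x)))) :=
    tendsto_integral_of_tendsto_integral_exp_inner
      (continuous_pi fun j => (continuous_evalAt _).comp continuous_subtype_val).measurable
      (tendsto_integral_exp_inner_VxaN hWt ht ha hN (ts := fun i => (i : ℝ) / n) (by simp)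
        (h_grid n) (div_self_le_one _))
      (f.compContinuous ⟨polygon x n, continuous_polygon x n⟩)
  have h_lim : Tendsto μ atTop (𝓝 μ₀) :=
    tendsto_of_tendsto_integral_comp continuous_interpolate tendsto_interpolate h_interpolate
      fun ε hε δ hδ => eventually_VxaN_real_lt_dist_interpolate_lt ht ha hN x hε hδ
  exact ProbabilityMeasure.tendsto_iff_forall_integral_tendsto.1 h_lim f

end Levy

/-! ### Geometrically distributed number of steps -/

section Geometric

variable {c h C : ℝ} {G : ℕ → ℝ}

lemma Ici_inter_preimage_floor_div (hh : 0 < h) (N : ℕ) :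
    Ici 0 ∩ (fun t => ⌊t / h⌋₊) ⁻¹' {N} = Ico (N * h) ((N + 1) * h) := by
  ext t
  have h_iff (ht : 0 ≤ t) : ⌊t / h⌋₊ = N ↔ t ∈ Ico (N * h) ((N + 1) * h) := by
    rw [Nat.floor_eq_iff (div_nonneg ht hh.le), le_div_iff₀ hh, div_lt_iff₀ hh, mem_Ico]
  exact ⟨fun ht => (h_iff ht.1).1 ht.2, fun ht =>
    have h_nonneg : 0 ≤ t := le_trans (by positivity) ht.1
    ⟨h_nonneg, (h_iff h_nonneg).2 ht⟩⟩

lemma measurable_floor_div (h : ℝ) : Measurable fun t : ℝ => ⌊t / h⌋₊ :=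
  Nat.measurable_floor.comp (measurable_id.div_const h)

lemma integrableOn_exp_neg_mul_mul_floor (hc : 0 < c) (hG : ∀ N, |G N| ≤ C) :
    IntegrableOn (fun t => c * exp (-(c * t)) * G ⌊t / h⌋₊) (Ioi 0) := by
  have h_exp : IntegrableOn (fun t => c * exp (-(c * t))) (Ioi 0) := by
    simpa only [IntegrableOn, neg_mul] using (exp_neg_integrableOn_Ioi 0 hc).const_mul c
  exact h_exp.mul_bdd
    ((measurable_of_countable G).comp (measurable_floor_div h)).aestronglyMeasurable
    (Eventually.of_forall fun _ => hG _)

lemma setIntegral_Ico_exp_neg_mul (c : ℝ) {u v : ℝ} (huv : u ≤ v) :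
    ∫ t in Ico u v, c * exp (-(c * t)) = exp (-(c * u)) - exp (-(c * v)) := by
  have h_deriv (t : ℝ) : HasDerivAt (fun t => -exp (-(c * t))) (c * exp (-(c * t))) t := by
    simpa only [id, mul_one, mul_neg, neg_neg, mul_comm c (exp _)] using
      ((hasDerivAt_id t).const_mul c).fun_neg.exp.fun_neg
  rw [integral_Ico_eq_integral_Ioc, ← intervalIntegral.integral_of_le huv,
    intervalIntegral.integral_eq_sub_of_hasDerivAt (fun t _ => h_deriv t)
      (Continuous.intervalIntegrable (by fun_prop) _ _), neg_sub_neg]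

lemma hasSum_integral_exp_neg_mul_floor (hc : 0 < c) (hh : 0 < h) (hG : ∀ N, |G N| ≤ C) :
    HasSum (fun N : ℕ => (1 - exp (-(c * h))) * (exp (-(c * h * N)) * G N))
      (∫ t in Ioi 0, c * exp (-(c * t)) * G ⌊t / h⌋₊) := by
  let S (N : ℕ) : Set ℝ := Ici 0 ∩ (fun t => ⌊t / h⌋₊) ⁻¹' {N}
  have h_union : ⋃ N, S N = Ici 0 := by
    rw [← inter_iUnion, ← preimage_iUnion, iUnion_of_singleton, preimage_univ, inter_univ]
  have h_meas (N : ℕ) : MeasurableSet (S N) :=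
    measurableSet_Ici.inter (measurable_floor_div h (measurableSet_singleton N))
  have h_disjoint : Pairwise (Function.onFun Disjoint S) :=
    (pairwise_disjoint_fiber _).mono fun _ _ hd => hd.mono inter_subset_right inter_subset_right
  have h_int := integrableOn_exp_neg_mul_mul_floor (h := h) hc hG
  rw [← integrableOn_Ici_iff_integrableOn_Ioi, ← h_union] at h_int
  rw [← integral_Ici_eq_integral_Ioi, ← h_union]
  refine (hasSum_integral_iUnion h_meas h_disjoint h_int).congr_fun fun N => ?_
  have h_Ico : S N = Ico (N * h) ((N + 1) * h) := Ici_inter_preimage_floor_div hh N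
  calc _ = (exp (-(c * (N * h))) - exp (-(c * ((N + 1) * h)))) * G N := by
        rw [show -(c * ((N + 1) * h)) = -(c * h) + -(c * (N * h)) by ring, exp_add,
          show c * h * N = c * (N * h) by ring]
        ring
    _ = ∫ t in S N, c * exp (-(c * t)) * G N := by
        rw [integral_mul_const, h_Ico, setIntegral_Ico_exp_neg_mul _ (by gcongr; linarith)]
    _ = _ := setIntegral_congr_fun (h_meas N) fun t ht => by
        rw [show ⌊t / h⌋₊ = N from ht.2]

lemma tendsto_mul_floor_div {ι : Type*} {l : Filter ι} {h : ι → ℝ} {t : ℝ} (ht : 0 ≤ t)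
    (hh : Tendsto h l (𝓝[>] 0)) : Tendsto (fun i => h i * ⌊t / h i⌋₊) l (𝓝 t) := by
  simpa only [Function.comp_def, Pi.inv_apply, div_inv_eq_mul, ← div_eq_mul_inv, mul_comm] using
    (tendsto_nat_floor_mul_div_atTop ht).comp hh.inv_tendsto_nhdsGT_zero

end Geometric

section WeakConvergence

variable {d : ℕ} [NeZero d] {x : Ed d} {m a : ℝ}

lemma abs_integral_VxaN_le (f : BoundedContinuousFunction (Omega1 x) ℝ) (a : ℝ) (N : ℕ) :
    |∫ ω, f ω ∂(VxaN x a N)| ≤ ‖f‖ :=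
  f.norm_integral_le_norm _

lemma hasSum_integral_Vxa (hm : m ≠ 0) (ha : a ≠ 0) (f : BoundedContinuousFunction (Omega1 x) ℝ) :
    HasSum (fun N : ℕ => (1 - exp (-(m ^ 2 / 2 * (a ^ 2 / d)))) *
        (exp (-(m ^ 2 / 2 * (a ^ 2 / d) * N)) * ∫ ω, f ω ∂(VxaN x a N)))
      (∫ ω, f ω ∂(Vxa x m a)) := by
  have hd : (0 : ℝ) < d := Nat.cast_pos.2 (Nat.pos_of_neZero d)
  set r := m ^ 2 / 2 * (a ^ 2 / d) with hr
  have hr_pos : 0 < r := by positivity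
  have h_rate : -m ^ 2 * a ^ 2 / (2 * d) = -r := by rw [hr]; field_simp
  have h_rate_mul (N : ℕ) : -m ^ 2 * a ^ 2 * N / (2 * d) = -(r * N) := by
    rw [mul_div_right_comm, h_rate, neg_mul]
  let ν : Measure (Omega1 x) :=
    Measure.sum fun N : ℕ => ENNReal.ofReal (exp (-(r * N))) • VxaN x a N
  have h_finite : IsFiniteMeasure ν := by
    have h_geom : Summable fun N : ℕ => exp (-(r * N)) := by
      simpa only [mul_neg, mul_comm r] using Real.summable_exp_nat_mul_iff.2 (neg_lt_zero.2 hr_pos)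
    refine ⟨?_⟩
    rw [Measure.sum_apply _ MeasurableSet.univ]
    simpa using h_geom.tsum_ofReal_lt_top
  have h_Vxa : Vxa x m a = ENNReal.ofReal (1 - exp (-r)) • ν := by
    simp only [Vxa, h_rate, h_rate_mul, ν]
  rw [h_Vxa, integral_smul_measure,
    ENNReal.toReal_ofReal (sub_nonneg.2 (exp_le_one_iff.2 (neg_nonpos.2 hr_pos.le)))]
  simpa only [integral_smul_measure, ENNReal.toReal_ofReal (exp_nonneg _), smul_eq_mul] using
    (hasSum_integral_measure (f.integrable ν)).const_smul (1 - exp (-r))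

lemma integral_Vxa (hm : m ≠ 0) (ha : a ≠ 0) (f : BoundedContinuousFunction (Omega1 x) ℝ) :
    ∫ ω, f ω ∂(Vxa x m a) = ∫ t in Ioi (0 : ℝ),
      m ^ 2 / 2 * exp (-(m ^ 2 / 2 * t)) * ∫ ω, f ω ∂(VxaN x a ⌊t / (a ^ 2 / d)⌋₊) := by
  have hd : (0 : ℝ) < d := Nat.cast_pos.2 (Nat.pos_of_neZero d)
  exact (hasSum_integral_Vxa hm ha f).unique
    (hasSum_integral_exp_neg_mul_floor (by positivity) (by positivity) (abs_integral_VxaN_le f a))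

theorem tendsto_integral_Vxa (hm : m ≠ 0) {Wt : ℝ → Measure (Omega1 x)}
    (hWt : IsWienerFamily x Wt) (f : BoundedContinuousFunction (Omega1 x) ℝ) :
    Tendsto (fun a => ∫ ω, f ω ∂(Vxa x m a)) (𝓝[>] 0)
      (𝓝 (∫ t in Ioi (0 : ℝ), m ^ 2 / 2 * exp (-(m ^ 2 / 2 * t)) * ∫ ω, f ω ∂(Wt t))) := by
  have hd : (0 : ℝ) < d := Nat.cast_pos.2 (Nat.pos_of_neZero d)
  have hc : 0 < m ^ 2 / 2 := by positivity
  refine tendsto_of_seq_tendsto fun a ha => ?_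
  obtain ⟨ha_lim, ha_pos⟩ := tendsto_nhdsWithin_iff.1 ha
  have h_mesh : Tendsto (fun i => a i ^ 2 / d) atTop (𝓝[>] 0) :=
    tendsto_nhdsWithin_iff.2 ⟨by simpa using (ha_lim.pow 2).div_const (d : ℝ),
      ha_pos.mono fun i hi => div_pos (pow_pos (mem_Ioi.1 hi) 2) hd⟩
  have h_Donsker {t : ℝ} (ht : 0 < t) :
      Tendsto (fun i => ∫ ω, f ω ∂(VxaN x (a i) ⌊t / (a i ^ 2 / d)⌋₊)) atTop
        (𝓝 (∫ ω, f ω ∂(Wt t))) :=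
    tendsto_integral_VxaN hWt ht ha_lim
      (by simpa only [div_mul_eq_mul_div] using tendsto_mul_floor_div ht.le h_mesh) f
  have h_dominated : Tendsto (fun i => ∫ t in Ioi (0 : ℝ),
      m ^ 2 / 2 * exp (-(m ^ 2 / 2 * t)) * ∫ ω, f ω ∂(VxaN x (a i) ⌊t / (a i ^ 2 / d)⌋₊)) atTop
      (𝓝 (∫ t in Ioi (0 : ℝ), m ^ 2 / 2 * exp (-(m ^ 2 / 2 * t)) * ∫ ω, f ω ∂(Wt t))) := by
    refine tendsto_integral_of_dominated_convergence
      (fun t => m ^ 2 / 2 * exp (-(m ^ 2 / 2 * t)) * ‖f‖)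
      (fun i => (integrableOn_exp_neg_mul_mul_floor hc
        (abs_integral_VxaN_le f (a i))).aestronglyMeasurable)
      (integrableOn_exp_neg_mul_mul_floor (h := 1) (G := fun _ => ‖f‖) hc
        fun _ => (abs_norm f).le)
      (fun i => Eventually.of_forall fun t => ?_)
      ((ae_restrict_mem measurableSet_Ioi).mono fun t ht => (h_Donsker ht).const_mul _)
    rw [norm_mul, Real.norm_of_nonneg (by positivity)]
    gcongr
    exact abs_integral_VxaN_le f _ _
  exact h_dominated.congr' (ha_pos.mono fun i hi => (integral_Vxa hm (mem_Ioi.1 hi).ne' f).symm)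

theorem Vxa_pushforward_tendsto_weakly_general (hm : m ≠ 0) {Wt : ℝ → Measure (Omega1 x)}
    (hWt : IsWienerFamily x Wt) {Q : Type*} [TopologicalSpace Q] [MeasurableSpace Q]
    [BorelSpace Q] {pr : Omega1 x → Q} (hpr : Continuous pr)
    (g : BoundedContinuousFunction Q ℝ) :
    Tendsto (fun a : ℝ => ∫ q, g q ∂(Measure.map pr (Vxa x m a))) (𝓝[>] 0)
      (𝓝 (m ^ 2 / 2 * ∫ t in Ioi (0 : ℝ), exp (-m ^ 2 * t / 2) * ∫ ω, g (pr ω) ∂(Wt t))) := by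
  have h_map (a : ℝ) : ∫ q, g q ∂(Measure.map pr (Vxa x m a)) = ∫ ω, g (pr ω) ∂(Vxa x m a) :=
    integral_map hpr.aemeasurable g.continuous.aestronglyMeasurable
  have h_rate (t : ℝ) : -m ^ 2 * t / 2 = -(m ^ 2 / 2 * t) := by ring
  rw [← integral_const_mul]
  simp only [h_map, h_rate, ← mul_assoc]
  exact tendsto_integral_Vxa hm hWt (g.compContinuous ⟨pr, hpr⟩)

end WeakConvergence

lemma quotDist_le_dist {d : ℕ} (ω ω' : PathSp d) : quotDist ω ω' ≤ dist ω ω' :=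
  ciInf_le ⟨0, by rintro _ ⟨φ, rfl⟩; exact dist_nonneg⟩
    (⟨Homeomorph.refl _, monotone_id⟩ : {φ : unitInterval ≃ₜ unitInterval // Monotone φ})

/-- **Theorem 3.2**: the pushed-forward measures `V_{x,a} = π_* V'_{x,a}` on the space
`Ω̄(x)` of unparametrized paths converge weakly, as `a → 0⁺`, to `(m²/2) V_x`, where
`V_x = π_* V'_x`.  Here `Ω̄(x)` is (any realization of) the metric quotient of `Ω(x)`
by the reparametrization pseudo-metric `d̄`, with quotient map `π = pr`. -/
theorem Vxa_pushforward_tendsto_weakly (d : ℕ) (hd : 1 ≤ d) (m : ℝ) (hm : 0 < m)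
    (x : Ed d) (Wt : ℝ → Measure (Omega1 x)) (hWt : IsWienerFamily x Wt)
    (Q : Type) [MetricSpace Q] [MeasurableSpace Q] [BorelSpace Q]
    (pr : Omega1 x → Q) (hsurj : Function.Surjective pr)
    (hdist : ∀ ω ω' : Omega1 x, dist (pr ω) (pr ω') = quotDist ω.1 ω'.1) :
    ∀ g : BoundedContinuousFunction Q ℝ,
      Tendsto (fun a : ℝ => ∫ q, g q ∂(Measure.map pr (Vxa x m a)))
        (nhdsWithin 0 (Set.Ioi 0))
        (nhds ((m ^ 2 / 2) *
          ∫ t in Set.Ioi (0 : ℝ), Real.exp (-m ^ 2 * t / 2) * ∫ ω, g (pr ω) ∂(Wt t))) := by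
  have : NeZero d := ⟨by omega⟩
  have h_lipschitz : LipschitzWith 1 pr :=
    LipschitzWith.mk_one fun ω ω' => (hdist ω ω').trans_le (quotDist_le_dist ω.1 ω'.1)
  exact Vxa_pushforward_tendsto_weakly_general hm.ne' hWt h_lipschitz.continuous

end
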